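/- arXiv:1412.1567 — 4 statements merged into one kernel-verified Lean document; each statement's English description precedes it below -/
import Mathlib

section
/- Let H ∈ ℂ^{m×n} with columns h_1,…,h_n, let C_xx ∈ ℂ^{n×n} be diagonal with positive real diagonal entries σ_{x_1}²,…,σ_{x_n}², and let C_nn ∈ ℂ^{m×m} be positive definite. Set C = H C_xx Hᴴ + C_nn (which is positive definite) and assume h_i ≠ 0. Define [D]_{i,i} = 1 / (σ_{x_i}² h_iᴴ C⁻¹ h_i) and let e_{CL,i}ᴴ be the i-th row of E_CL = D C_xx Hᴴ C⁻¹, where D is the diagonal matrix with these entries. Then e_{CL,i}ᴴ h_i = 1, and e_{CL,i} is the unique minimizer of eᴴ C e over all e ∈ ℂ^m satisfying eᴴ h_i = 1. -/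
open Matrix
open scoped ComplexOrder

/-!
Up to a scalar, the `i`-th row of the estimator is `(C⁻¹ h_i)ᴴ`: the factor `σ_{x_i}²` of `C_xx`
cancels against `D`, leaving `e_{CL,i} = C⁻¹ h_i / (h_iᴴ C⁻¹ h_i)`. Hence `C e_{CL,i}` is
a multiple of `h_i`, so `e_{CL,i}` is `C`-orthogonal to every direction `d` with `dᴴ h_i = 0`, and
the Pythagorean identity `(e + d)ᴴ C (e + d) = eᴴ C e + dᴴ C d` gives strict minimality.
-/

section QuadraticForm

variable {m R : Type*} [Fintype m] [CommRing R] [StarRing R] {A : Matrix m m R}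

lemma star_dotProduct_mulVec_of_isHermitian (hA : A.IsHermitian) (x y : m → R) :
    star (star x ⬝ᵥ (A *ᵥ y)) = star y ⬝ᵥ (A *ᵥ x) := by
  rw [star_dotProduct, star_star, star_mulVec, hA.eq, ← dotProduct_mulVec]

lemma quadratic_add_of_orthogonal (hA : A.IsHermitian) {g d : m → R}
    (hgd : star d ⬝ᵥ (A *ᵥ g) = 0) :
    star (g + d) ⬝ᵥ (A *ᵥ (g + d)) = star g ⬝ᵥ (A *ᵥ g) + star d ⬝ᵥ (A *ᵥ d) := by
  have hdg : star g ⬝ᵥ (A *ᵥ d) = 0 := by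
    rw [← star_dotProduct_mulVec_of_isHermitian hA, hgd, star_zero]
  rw [star_add, mulVec_add, add_dotProduct, dotProduct_add, dotProduct_add, hgd, hdg, add_zero,
    zero_add]

variable [PartialOrder R] {g e : m → R}

lemma quadratic_le_of_orthogonal_sub [AddLeftMono R] (hA : A.PosSemidef)
    (horth : star (e - g) ⬝ᵥ (A *ᵥ g) = 0) :
    star g ⬝ᵥ (A *ᵥ g) ≤ star e ⬝ᵥ (A *ᵥ e) := by
  calc star g ⬝ᵥ (A *ᵥ g)
      ≤ star g ⬝ᵥ (A *ᵥ g) + star (e - g) ⬝ᵥ (A *ᵥ (e - g)) :=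
        le_add_of_nonneg_right (hA.dotProduct_mulVec_nonneg _)
    _ = star e ⬝ᵥ (A *ᵥ e) := by
        rw [← quadratic_add_of_orthogonal hA.isHermitian horth, add_sub_cancel]

lemma eq_of_quadratic_eq_of_orthogonal_sub (hA : A.PosDef)
    (horth : star (e - g) ⬝ᵥ (A *ᵥ g) = 0)
    (heq : star e ⬝ᵥ (A *ᵥ e) = star g ⬝ᵥ (A *ᵥ g)) : e = g := by
  have hzero : star (e - g) ⬝ᵥ (A *ᵥ (e - g)) = 0 := by
    rwa [← add_sub_cancel g e, quadratic_add_of_orthogonal hA.isHermitian horth,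
      add_eq_left] at heq
  by_contra hne
  exact (hA.dotProduct_mulVec_pos (sub_ne_zero.mpr hne)).ne' hzero

end QuadraticForm

section MvdrWeights

variable {m K : Type*} [Fintype m] [DecidableEq m] [Field K] [StarRing K]
  {C : Matrix m m K} {h : m → K}

/-- The minimum variance distortionless response (Capon) weights `C⁻¹ h / (hᴴ C⁻¹ h)`: the vector
that minimizes `eᴴ C e` subject to `eᴴ h = 1` for positive definite `C` and `h ≠ 0`. -/
noncomputable def mvdrWeights (C : Matrix m m K) (h : m → K) : m → K :=
  (star h ⬝ᵥ (C⁻¹ *ᵥ h))⁻¹ • (C⁻¹ *ᵥ h)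

lemma mulVec_mvdrWeights (hC : IsUnit C) (h : m → K) :
    C *ᵥ mvdrWeights C h = (star h ⬝ᵥ (C⁻¹ *ᵥ h))⁻¹ • h := by
  rw [mvdrWeights, mulVec_smul, mulVec_mulVec,
    mul_nonsing_inv C ((isUnit_iff_isUnit_det C).mp hC), one_mulVec]

lemma star_mvdrWeights (hC : C.IsHermitian) (h : m → K) :
    star (mvdrWeights C h) = (star h ⬝ᵥ (C⁻¹ *ᵥ h))⁻¹ • (star h ᵥ* C⁻¹) := by
  rw [mvdrWeights, star_smul, star_inv₀, star_dotProduct_mulVec_of_isHermitian hC.inv,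
    star_mulVec, hC.inv.eq]

variable [PartialOrder K]

lemma star_mvdrWeights_dotProduct (hC : C.PosDef) (hh : h ≠ 0) :
    star (mvdrWeights C h) ⬝ᵥ h = 1 := by
  have hne : star h ⬝ᵥ (C⁻¹ *ᵥ h) ≠ 0 := (hC.inv.dotProduct_mulVec_pos hh).ne'
  rw [star_mvdrWeights hC.isHermitian, smul_dotProduct, ← dotProduct_mulVec, smul_eq_mul,
    inv_mul_cancel₀ hne]

lemma star_sub_mvdrWeights_dotProduct_mulVec (hC : C.PosDef) (hh : h ≠ 0) {e : m → K}
    (he : star e ⬝ᵥ h = 1) :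
    star (e - mvdrWeights C h) ⬝ᵥ (C *ᵥ mvdrWeights C h) = 0 := by
  rw [mulVec_mvdrWeights hC.isUnit, dotProduct_smul, star_sub, sub_dotProduct, he,
    star_mvdrWeights_dotProduct hC hh, sub_self, smul_zero]

end MvdrWeights

section CwcuLmmse

variable {m n K : Type*} [Fintype m] [DecidableEq m] [Fintype n] [DecidableEq n]
  [Field K] [StarRing K]

/-- The CWCU LMMSE estimator `D C_xx Hᴴ C⁻¹` for uncorrelated parameters, where `C_xx = diag σ`
(so `σ j` is a variance, not a standard deviation), `C` is the covariance matrix of the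
observations and `D = diag (1 / (σ j * h_jᴴ C⁻¹ h_j))` makes row `j` satisfy `eᴴ h_j = 1`. -/
noncomputable def cwcuLmmse (H : Matrix m n K) (σ : n → K) (C : Matrix m m K) : Matrix n m K :=
  diagonal (fun j => 1 / (σ j * (star (H.col j) ⬝ᵥ (C⁻¹ *ᵥ H.col j)))) * diagonal σ * Hᴴ * C⁻¹

lemma cwcuLmmse_row (H : Matrix m n K) {σ : n → K} {C : Matrix m m K} (hC : C.IsHermitian)
    {i : n} (hσi : σ i ≠ 0) :
    cwcuLmmse H σ C i = star (mvdrWeights C (H.col i)) := by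
  set a := star (H.col i) ⬝ᵥ (C⁻¹ *ᵥ H.col i) with ha
  have hscalar : 1 / (σ i * a) * σ i = a⁻¹ := by
    rw [one_div, _root_.mul_inv_rev, inv_mul_cancel_right₀ hσi]
  rw [cwcuLmmse, diagonal_mul_diagonal, mul_apply_eq_vecMul, star_mvdrWeights hC, ← smul_vecMul]
  congr 1
  ext k
  rw [diagonal_mul, ← ha, hscalar]
  rfl

theorem stmt_5_general [PartialOrder K] [StarOrderedRing K] (H : Matrix m n K)
    (σ : n → K) (hσ : 0 ≤ σ) (Cnn : Matrix m m K) (hCnn : Cnn.PosDef)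
    (i : n) (hσi : σ i ≠ 0) (hhi : H.col i ≠ 0) :
    let C := H * diagonal σ * Hᴴ + Cnn
    let ECL := cwcuLmmse H σ C
    let eCL := star (ECL i)
    C.PosDef ∧ ECL i ⬝ᵥ H.col i = 1 ∧
      ∀ e : m → K, star e ⬝ᵥ H.col i = 1 →
        star eCL ⬝ᵥ (C *ᵥ eCL) ≤ star e ⬝ᵥ (C *ᵥ e) ∧
        (star e ⬝ᵥ (C *ᵥ e) = star eCL ⬝ᵥ (C *ᵥ eCL) → e = eCL) := by
  intro C ECL eCL
  have hC : C.PosDef :=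
    .posSemidef_add ((PosSemidef.diagonal hσ).mul_mul_conjTranspose_same H) hCnn
  have hrow : ECL i = star (mvdrWeights C (H.col i)) := cwcuLmmse_row H hC.isHermitian hσi
  have heCL : eCL = mvdrWeights C (H.col i) := star_eq_iff_star_eq.mpr hrow.symm
  rw [hrow, heCL]
  refine ⟨hC, star_mvdrWeights_dotProduct hC hhi, fun e he => ?_⟩
  have horth := star_sub_mvdrWeights_dotProduct_mulVec hC hhi he
  exact ⟨quadratic_le_of_orthogonal_sub hC.posSemidef horth,
    eq_of_quadratic_eq_of_orthogonal_sub hC horth⟩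

end CwcuLmmse

/-- for the linear model with diagonal `C_xx` having positive entries and
positive definite `C_nn`, with `C = H C_xx Hᴴ + C_nn` (positive definite) and `h_i ≠ 0`,
the `i`-th row `e_{CL,i}ᴴ` of `E_CL = D C_xx Hᴴ C⁻¹` (with `[D]_{i,i} = 1/(σ_{x_i}² h_iᴴC⁻¹h_i)`)
satisfies `e_{CL,i}ᴴ h_i = 1` and `e_{CL,i}` is the unique minimizer of `eᴴCe` subject to
`eᴴh_i = 1`. -/
theorem stmt_5 {m n : ℕ} (H : Matrix (Fin m) (Fin n) ℂ)
    (σ : Fin n → ℝ) (hσ : ∀ j, 0 < σ j)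
    (Cnn : Matrix (Fin m) (Fin m) ℂ) (hCnn : Cnn.PosDef)
    (i : Fin n) (hhi : (fun k => H k i) ≠ 0) :
    let Cxx : Matrix (Fin n) (Fin n) ℂ := Matrix.diagonal fun j => (σ j : ℂ)
    let C := H * Cxx * Hᴴ + Cnn
    let hi : Fin m → ℂ := fun k => H k i
    let D : Matrix (Fin n) (Fin n) ℂ :=
      Matrix.diagonal fun j =>
        1 / ((σ j : ℂ) * (star (fun k => H k j) ⬝ᵥ (C⁻¹ *ᵥ fun k => H k j)))
    let ECL := D * Cxx * Hᴴ * C⁻¹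
    let eCL : Fin m → ℂ := star (ECL i)
    C.PosDef ∧
    ECL i ⬝ᵥ hi = 1 ∧
    ∀ e : Fin m → ℂ, star e ⬝ᵥ hi = 1 →
      (star eCL ⬝ᵥ (C *ᵥ eCL)).re ≤ (star e ⬝ᵥ (C *ᵥ e)).re ∧
      (star e ⬝ᵥ (C *ᵥ e) = star eCL ⬝ᵥ (C *ᵥ eCL) → e = eCL) := by
  obtain ⟨hC, hunbiased, hmin⟩ := stmt_5_general H (fun j => (σ j : ℂ))
    (fun j => Complex.zero_le_real.mpr (hσ j).le) Cnn hCnn i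
    (Complex.ofReal_ne_zero.mpr (hσ i).ne') hhi
  exact ⟨hC, hunbiased, fun e he => (hmin e he).imp_left Complex.re_le_re⟩
end

section
/- Let C₀ ∈ ℂ^{m×m} be positive definite, let h ∈ ℂ^m be nonzero, let σ² ≥ 0 be real, and set C = C₀ + σ² h hᴴ (which is positive definite). Then (hᴴ C⁻¹ h)⁻¹ C⁻¹ h = (hᴴ C₀⁻¹ h)⁻¹ C₀⁻¹ h. In particular, in the linear model with mutually independent parameters, the i-th row of the CWCU LMMSE estimator, e_{CL,i} = (h_iᴴ C⁻¹ h_i)⁻¹ C⁻¹ h_i with C = H C_xx Hᴴ + C_nn, is independent of the variance σ_{x_i}² of the i-th parameter and equals (h_iᴴ C_i⁻¹ h_i)⁻¹ C_i⁻¹ h_i, where C_i = H̄_i C_{x̄_i x̄_i} H̄_iᴴ + C_nn is obtained by removing the contribution σ_{x_i}² h_i h_iᴴ of the i-th parameter from C. -/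
open Matrix
open scoped ComplexOrder

/-! A rank-one update `A ↦ A + u vᵀ` only rescales `A⁻¹ u`, because `(A + u vᵀ) A⁻¹ u` is again a
multiple of `u`; normalizing by a linear functional removes the scalar. -/

section RankOneUpdate

variable {n R K : Type*} [Fintype n]

theorem add_vecMulVec_mulVec_inv_mulVec [DecidableEq n] [CommRing R] {A : Matrix n n R}
    (hA : IsUnit A) (u v : n → R) :
    (A + vecMulVec u v) *ᵥ (A⁻¹ *ᵥ u) = (1 + v ⬝ᵥ (A⁻¹ *ᵥ u)) • u := by
  have hdet : IsUnit A.det := (isUnit_iff_isUnit_det A).mp hA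
  rw [add_mulVec, mulVec_mulVec, mul_nonsing_inv A hdet, one_mulVec, vecMulVec_mulVec,
    op_smul_eq_smul, add_smul, one_smul]

theorem smul_inv_add_vecMulVec_mulVec [DecidableEq n] [CommRing R] {A : Matrix n n R}
    {u v : n → R} (hA : IsUnit A) (hB : IsUnit (A + vecMulVec u v)) :
    (1 + v ⬝ᵥ (A⁻¹ *ᵥ u)) • ((A + vecMulVec u v)⁻¹ *ᵥ u) = A⁻¹ *ᵥ u := by
  have hdet : IsUnit (A + vecMulVec u v).det := (isUnit_iff_isUnit_det _).mp hB
  rw [← mulVec_smul, ← add_vecMulVec_mulVec_inv_mulVec hA, mulVec_mulVec,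
    nonsing_inv_mul _ hdet, one_mulVec]

theorem inv_dotProduct_smul_smul [Field K] (w x : n → K) {k : K} (hk : k ≠ 0) :
    (w ⬝ᵥ (k • x))⁻¹ • (k • x) = (w ⬝ᵥ x)⁻¹ • x := by
  rw [dotProduct_smul, smul_eq_mul, smul_smul, _root_.mul_inv_rev, inv_mul_cancel_right₀ hk]

theorem inv_dotProduct_smul_inv_add_vecMulVec_mulVec [DecidableEq n] [Field K]
    {A : Matrix n n K} {u v w : n → K} (hA : IsUnit A) (hB : IsUnit (A + vecMulVec u v))
    (hw : w ⬝ᵥ (A⁻¹ *ᵥ u) ≠ 0) :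
    (w ⬝ᵥ ((A + vecMulVec u v)⁻¹ *ᵥ u))⁻¹ • ((A + vecMulVec u v)⁻¹ *ᵥ u) =
      (w ⬝ᵥ (A⁻¹ *ᵥ u))⁻¹ • (A⁻¹ *ᵥ u) := by
  have rescale := smul_inv_add_vecMulVec_mulVec hA hB
  have scalar_ne_zero : 1 + v ⬝ᵥ (A⁻¹ *ᵥ u) ≠ 0 := by
    intro hzero
    rw [hzero, zero_smul] at rescale
    exact hw (by rw [← rescale, dotProduct_zero])
  rw [← inv_dotProduct_smul_smul w _ scalar_ne_zero, rescale]

end RankOneUpdate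

section PosDef

variable {n K : Type*} [Field K] [PartialOrder K] [StarRing K] [StarOrderedRing K]

theorem posDef_add_smul_vecMulVec_self_star [Finite n] {A : Matrix n n K} (hA : A.PosDef)
    (h : n → K) {c : K} (hc : 0 ≤ c) : (A + c • vecMulVec h (star h)).PosDef :=
  hA.add_posSemidef ((posSemidef_vecMulVec_self_star h).smul hc)

theorem stmt_6_general [Fintype n] [DecidableEq n] {C₀ : Matrix n n K} (hC₀ : C₀.PosDef)
    {h : n → K} (hh : h ≠ 0) {c : K} (hc : 0 ≤ c) :
    let C := C₀ + c • vecMulVec h (star h)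
    C.PosDef ∧
    (star h ⬝ᵥ (C⁻¹ *ᵥ h))⁻¹ • (C⁻¹ *ᵥ h) =
      (star h ⬝ᵥ (C₀⁻¹ *ᵥ h))⁻¹ • (C₀⁻¹ *ᵥ h) := by
  intro C
  have hC : C.PosDef := posDef_add_smul_vecMulVec_self_star hC₀ h hc
  have hC_eq : C = C₀ + vecMulVec h (c • star h) := by rw [vecMulVec_smul]
  have hgain : star h ⬝ᵥ (C₀⁻¹ *ᵥ h) ≠ 0 := (hC₀.inv.dotProduct_mulVec_pos hh).ne'
  refine ⟨hC, ?_⟩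
  rw [hC_eq] at hC ⊢
  exact inv_dotProduct_smul_inv_add_vecMulVec_mulVec hC₀.isUnit hC.isUnit hgain

end PosDef

/-- for positive definite `C₀`, nonzero `h`, `σ² ≥ 0` and
`C = C₀ + σ² h hᴴ` (positive definite), one has
`(hᴴC⁻¹h)⁻¹ C⁻¹h = (hᴴC₀⁻¹h)⁻¹ C₀⁻¹h`; i.e. the CWCU LMMSE row is independent of the
variance of the corresponding parameter. -/
theorem stmt_6 {m : ℕ} (C0 : Matrix (Fin m) (Fin m) ℂ) (hC0 : C0.PosDef)
    (h : Fin m → ℂ) (hh : h ≠ 0) (σ2 : ℝ) (hσ2 : 0 ≤ σ2) :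
    let C := C0 + (σ2 : ℂ) • Matrix.vecMulVec h (star h)
    C.PosDef ∧
    (star h ⬝ᵥ (C⁻¹ *ᵥ h))⁻¹ • (C⁻¹ *ᵥ h) =
      (star h ⬝ᵥ (C0⁻¹ *ᵥ h))⁻¹ • (C0⁻¹ *ᵥ h) :=
  stmt_6_general hC0 hh (Complex.zero_le_real.mpr hσ2)
end

section
/- Let H ∈ ℂ^{m×n}, let C_nn ∈ ℂ^{m×m} be positive definite, let V ∈ ℂ^{n×p}, and assume Vᴴ Hᴴ C_nn⁻¹ H V is invertible. Then for every matrix E ∈ ℂ^{n×m} satisfying the subspace unbiasedness constraint E H V = V, the matrix E C_nn Eᴴ − V(Vᴴ Hᴴ C_nn⁻¹ H V)⁻¹ Vᴴ is positive semidefinite; i.e., E_{B2} = V(Vᴴ Hᴴ C_nn⁻¹ H V)⁻¹ Vᴴ Hᴴ C_nn⁻¹ minimizes the error covariance (in the Loewner order) among all linear estimators satisfying EHV = V. -/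
open Matrix
open scoped ComplexOrder

/-! Under the constraint `E * A = B`, the product `F * C * Eᴴ` of the Gauss–Markov estimator `F` and
an admissible `E` depends only on the data, since `F * C = B * (Aᴴ * C⁻¹ * A)⁻¹ * Aᴴ`. Hence `E - F`
is orthogonal to `F` for the form `(X, Y) ↦ X * C * Yᴴ`, and by Pythagoras the excess covariance of
`E` over `F` is `(E - F) * C * (E - F)ᴴ`. -/

theorem sub_mul_mul_conjTranspose_sub {m n R : Type*} [Fintype m] [NonUnitalRing R] [StarRing R]
    {C : Matrix m m R} (hC : C.IsHermitian) {E F : Matrix n m R}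
    (hEF : F * C * Eᴴ = F * C * Fᴴ) :
    (E - F) * C * (E - F)ᴴ = E * C * Eᴴ - F * C * Fᴴ := by
  have hFE : E * C * Fᴴ = F * C * Fᴴ := by
    simpa only [conjTranspose_mul, conjTranspose_conjTranspose, hC.eq, Matrix.mul_assoc]
      using congrArg conjTranspose hEF
  rw [conjTranspose_sub, Matrix.sub_mul, Matrix.sub_mul, Matrix.mul_sub, Matrix.mul_sub, hEF, hFE,
    sub_self, sub_zero]

section GaussMarkov

variable {m n q R : Type*} [Fintype m] [DecidableEq m] [Fintype q] [DecidableEq q]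
  [CommRing R] [StarRing R]

/-- The Gauss–Markov estimator for the linear model `y = A * z + noise` with noise covariance `C`:
it estimates `B * z` by applying `B` to the weighted least squares solution. For `A = H * V` and
`B = V` it is the estimator of a parameter lying in the column space of `V`. -/
noncomputable def gaussMarkovEstimator (A : Matrix m q R) (C : Matrix m m R) (B : Matrix n q R) :
    Matrix n m R :=
  B * (Aᴴ * C⁻¹ * A)⁻¹ * Aᴴ * C⁻¹

variable {A : Matrix m q R} {C : Matrix m m R} {B : Matrix n q R} {E : Matrix n m R}

theorem gaussMarkovEstimator_mul (hM : IsUnit (Aᴴ * C⁻¹ * A).det) :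
    gaussMarkovEstimator A C B * A = B := by
  simpa only [gaussMarkovEstimator, Matrix.mul_assoc]
    using nonsing_inv_mul_cancel_right (Aᴴ * C⁻¹ * A) B hM

theorem gaussMarkovEstimator_mul_mul_conjTranspose (hC : IsUnit C.det) (hE : E * A = B) :
    gaussMarkovEstimator A C B * C * Eᴴ = B * (Aᴴ * C⁻¹ * A)⁻¹ * Bᴴ := by
  rw [gaussMarkovEstimator, nonsing_inv_mul_cancel_right _ _ hC, Matrix.mul_assoc,
    ← conjTranspose_mul, hE]

theorem stmt_13_general [Finite n] [PartialOrder R] (hC : C.PosSemidef) (hCdet : IsUnit C.det)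
    (hM : IsUnit (Aᴴ * C⁻¹ * A).det) (hE : E * A = B) :
    (E * C * Eᴴ - B * (Aᴴ * C⁻¹ * A)⁻¹ * Bᴴ).PosSemidef := by
  let F := gaussMarkovEstimator A C B
  have hFE : F * C * Eᴴ = B * (Aᴴ * C⁻¹ * A)⁻¹ * Bᴴ :=
    gaussMarkovEstimator_mul_mul_conjTranspose hCdet hE
  have hFF : F * C * Fᴴ = B * (Aᴴ * C⁻¹ * A)⁻¹ * Bᴴ :=
    gaussMarkovEstimator_mul_mul_conjTranspose hCdet (gaussMarkovEstimator_mul hM)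
  rw [← hFF, ← sub_mul_mul_conjTranspose_sub hC.isHermitian (hFE.trans hFF.symm)]
  exact hC.mul_mul_conjTranspose_same (E - F)

end GaussMarkov

/-- with positive definite `C_nn` and invertible `VᴴHᴴC_nn⁻¹HV`, for every
`E` satisfying the subspace unbiasedness constraint `EHV = V`, the matrix
`E C_nn Eᴴ − V(VᴴHᴴC_nn⁻¹HV)⁻¹Vᴴ` is positive semidefinite. -/
theorem stmt_13 {m n p : ℕ} (H : Matrix (Fin m) (Fin n) ℂ)
    (Cnn : Matrix (Fin m) (Fin m) ℂ) (hCnn : Cnn.PosDef)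
    (V : Matrix (Fin n) (Fin p) ℂ)
    (hInv : IsUnit (Vᴴ * Hᴴ * Cnn⁻¹ * H * V).det) :
    ∀ E : Matrix (Fin n) (Fin m) ℂ, E * H * V = V →
      (E * Cnn * Eᴴ - V * (Vᴴ * Hᴴ * Cnn⁻¹ * H * V)⁻¹ * Vᴴ).PosSemidef := by
  intro E hE
  rw [Matrix.mul_assoc _ H V] at hE hInv ⊢
  rw [← conjTranspose_mul] at hInv ⊢
  exact stmt_13_general hCnn.posSemidef ((isUnit_iff_isUnit_det _).1 hCnn.isUnit) hInv hE
end

section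
/- Let H ∈ ℂ^{m×n}, let C_nn ∈ ℂ^{m×m} be positive definite, let V ∈ ℂ^{n×p}, and assume both Hᴴ C_nn⁻¹ H and Vᴴ Hᴴ C_nn⁻¹ H V are invertible. Then the matrix (Hᴴ C_nn⁻¹ H)⁻¹ − V(Vᴴ Hᴴ C_nn⁻¹ H V)⁻¹ Vᴴ is positive semidefinite; i.e., when the parameter vector is known to lie in the column space of V, the subspace-constrained estimator E_{B2} has error covariance no larger (in the Loewner order) than that of the unconstrained globally unbiased estimator E_{B1}. -/
open Matrix
open scoped ComplexOrder

/-!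
Put `A = HᴴC⁻¹H` and `P = V(VᴴAV)⁻¹Vᴴ`, the two error covariances being `A⁻¹` and `P`. Since
`PAP = P`, the Hermitian difference `D = A⁻¹ - P` also satisfies `DAD = D`. Hence `D = DᴴAD` is
positive semidefinite because `A` is.
-/

theorem sub_mul_mul_sub_self_of_mul_eq_one {R : Type*} [Ring R] {a b p : R}
    (hab : a * b = 1) (hba : b * a = 1) (hp : p * a * p = p) :
    (b - p) * a * (b - p) = b - p :=
  calc (b - p) * a * (b - p) = b * a * b - b * a * p - p * (a * b) + p * a * p := by noncomm_ring
    _ = b - p := by rw [hab, hba, hp, one_mul, one_mul, mul_one, sub_add_cancel]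

section GramMatrix

variable {R m n p : Type*} [Fintype m] [Fintype n]

theorem mul_inv_mul_mul_self [CommRing R] [Fintype p] [DecidableEq p]
    (A : Matrix m n R) (V : Matrix n p R) (W : Matrix p m R) (hWAV : IsUnit (W * A * V).det) :
    V * (W * A * V)⁻¹ * W * A * (V * (W * A * V)⁻¹ * W) = V * (W * A * V)⁻¹ * W :=
  calc V * (W * A * V)⁻¹ * W * A * (V * (W * A * V)⁻¹ * W)
      = V * ((W * A * V)⁻¹ * (W * A * V)) * (W * A * V)⁻¹ * W := by
        simp only [Matrix.mul_assoc]
    _ = V * (W * A * V)⁻¹ * W := by rw [nonsing_inv_mul _ hWAV, Matrix.mul_one]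

theorem posSemidef_of_isHermitian_of_mul_mul_self [Ring R] [PartialOrder R] [StarRing R]
    {A D : Matrix n n R} (hA : A.PosSemidef) (hD : D.IsHermitian) (hDAD : D * A * D = D) :
    D.PosSemidef := by
  simpa only [hD.eq, hDAD] using hA.conjTranspose_mul_mul_same D

variable [CommRing R] [PartialOrder R] [StarRing R] [DecidableEq n] [Fintype p] [DecidableEq p]

theorem posSemidef_inv_sub_mul_inv_mul_conjTranspose {A : Matrix n n R} (hA : A.PosSemidef)
    (V : Matrix n p R) (hAdet : IsUnit A.det) (hVAV : IsUnit (Vᴴ * A * V).det) :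
    (A⁻¹ - V * (Vᴴ * A * V)⁻¹ * Vᴴ).PosSemidef := by
  have hP : (V * (Vᴴ * A * V)⁻¹ * Vᴴ).IsHermitian :=
    isHermitian_mul_mul_conjTranspose V (hA.conjTranspose_mul_mul_same V).isHermitian.inv
  exact posSemidef_of_isHermitian_of_mul_mul_self hA (hA.isHermitian.inv.sub hP)
    (sub_mul_mul_sub_self_of_mul_eq_one (mul_nonsing_inv A hAdet) (nonsing_inv_mul A hAdet)
      (mul_inv_mul_mul_self A V Vᴴ hVAV))

theorem stmt_14_general (H : Matrix m n R) {W : Matrix m m R} (hW : W.PosSemidef)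
    (V : Matrix n p R) (hInv1 : IsUnit (Hᴴ * W * H).det)
    (hInv2 : IsUnit (Vᴴ * Hᴴ * W * H * V).det) :
    ((Hᴴ * W * H)⁻¹ - V * (Vᴴ * Hᴴ * W * H * V)⁻¹ * Vᴴ).PosSemidef := by
  have hassoc : Vᴴ * Hᴴ * W * H * V = Vᴴ * (Hᴴ * W * H) * V := by
    simp only [Matrix.mul_assoc]
  rw [hassoc] at hInv2 ⊢
  exact posSemidef_inv_sub_mul_inv_mul_conjTranspose (hW.conjTranspose_mul_mul_same H) V hInv1 hInv2

end GramMatrix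

/-- with positive definite `C_nn`, both `HᴴC_nn⁻¹H` and `VᴴHᴴC_nn⁻¹HV`
invertible, the matrix `(HᴴC_nn⁻¹H)⁻¹ − V(VᴴHᴴC_nn⁻¹HV)⁻¹Vᴴ` is positive semidefinite. -/
theorem stmt_14 {m n p : ℕ} (H : Matrix (Fin m) (Fin n) ℂ)
    (Cnn : Matrix (Fin m) (Fin m) ℂ) (hCnn : Cnn.PosDef)
    (V : Matrix (Fin n) (Fin p) ℂ)
    (hInv1 : IsUnit (Hᴴ * Cnn⁻¹ * H).det)
    (hInv2 : IsUnit (Vᴴ * Hᴴ * Cnn⁻¹ * H * V).det) :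
    ((Hᴴ * Cnn⁻¹ * H)⁻¹ - V * (Vᴴ * Hᴴ * Cnn⁻¹ * H * V)⁻¹ * Vᴴ).PosSemidef :=
  stmt_14_general H hCnn.posSemidef.inv V hInv1 hInv2
end
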